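/- Assume E₀, U, L, K satisfy the hypothesis and define h := {(x,y) ∈ BD(G) ⊕ BD(G) : π*_{BD(G)}x ∈ E₀ and K^⋄Kπ*_{BD(G)}x − L^⋄π*_{BD(D)}Ġy ∈ E}. Then h is a linear subspace of BD(G) ⊕ BD(G) and h is maximal monotone. -/

import Mathlib

open scoped ComplexInnerProductSpace
open Filter Topology Classical

noncomputable section

variable {E H : Type*}
  [NormedAddCommGroup E] [InnerProductSpace ℂ E] [CompleteSpace E]
  [NormedAddCommGroup H] [InnerProductSpace ℂ H] [CompleteSpace H]

/-- The operator `G := (−D₀)*`. -/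
def Gop (D₀ : H →ₗ.[ℂ] E) : E →ₗ.[ℂ] H := (-D₀).adjoint

/-- The operator `D := −(G₀)*`. -/
def Dop (G₀ : E →ₗ.[ℂ] H) : H →ₗ.[ℂ] E := -(G₀.adjoint)

/-- Pointwise application of `G`, defined to be `0` off the domain. -/
def Gap (D₀ : H →ₗ.[ℂ] E) (u : E) : H :=
  if h : u ∈ (Gop D₀).domain then Gop D₀ ⟨u, h⟩ else 0

/-- Pointwise application of `D`, defined to be `0` off the domain. -/
def Dap (G₀ : E →ₗ.[ℂ] H) (w : H) : E :=
  if h : w ∈ (Dop G₀).domain then Dop G₀ ⟨w, h⟩ else 0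

/-- The graph inner product of `D_G`: `⟪x,y⟫_E + ⟪Gx,Gy⟫_H`. -/
def innG (D₀ : H →ₗ.[ℂ] E) (x y : E) : ℂ := ⟪x, y⟫ + ⟪Gap D₀ x, Gap D₀ y⟫

/-- The graph inner product of `D_D`: `⟪x,y⟫_H + ⟪Dx,Dy⟫_E`. -/
def innD (G₀ : E →ₗ.[ℂ] H) (x y : H) : ℂ := ⟪x, y⟫ + ⟪Dap G₀ x, Dap G₀ y⟫

/-- The boundary data space `BD(G)`, the orthogonal complement of `D(G₀)` in `D_G`. -/
def BDG (G₀ : E →ₗ.[ℂ] H) (D₀ : H →ₗ.[ℂ] E) : Set E :=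
  {u | u ∈ (Gop D₀).domain ∧ ∀ v ∈ G₀.domain, innG D₀ u v = 0}

/-- The boundary data space `BD(D)`, the orthogonal complement of `D(D₀)` in `D_D`. -/
def BDD (G₀ : E →ₗ.[ℂ] H) (D₀ : H →ₗ.[ℂ] E) : Set H :=
  {w | w ∈ (Dop G₀).domain ∧ ∀ v ∈ D₀.domain, innD G₀ w v = 0}

variable {U E₀ : Type*}
  [NormedAddCommGroup U] [InnerProductSpace ℂ U] [CompleteSpace U]
  [NormedAddCommGroup E₀] [InnerProductSpace ℂ E₀] [CompleteSpace E₀]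

/-- Closedness of the operator `(L,K) : E₀ ⊆ E → H ⊕ U`: whenever `wₙ` in `E₀` with `wₙ → w`
in `E`, `Lwₙ → v` in `H` and `Kwₙ → z` in `U`, then `w ∈ E₀`, `Lw = v` and `Kw = z`. -/
def ClosedLK (j : E₀ →L[ℂ] E) (L : E₀ →L[ℂ] H) (K : E₀ →L[ℂ] U) : Prop :=
  ∀ (f : ℕ → E₀) (w : E) (v : H) (z : U),
    Tendsto (fun n => j (f n)) atTop (nhds w) →
    Tendsto (fun n => L (f n)) atTop (nhds v) →
    Tendsto (fun n => K (f n)) atTop (nhds z) →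
    ∃ w₀ : E₀, j w₀ = w ∧ L w₀ = v ∧ K w₀ = z

/-- The boundary relation `h` associated with `A`:
`h = {(x,y) ∈ BD(G) ⊕ BD(G) : π*x ∈ E₀, K^⋄Kπ*x − L^⋄π*Ġy ∈ E}`. -/
def hRel (G₀ : E →ₗ.[ℂ] H) (D₀ : H →ₗ.[ℂ] E) (j : E₀ →L[ℂ] E) (L : E₀ →L[ℂ] H)
    (K : E₀ →L[ℂ] U) : Set (E × E) :=
  {p | p.1 ∈ BDG G₀ D₀ ∧ p.2 ∈ BDG G₀ D₀ ∧
    ∃ x₀ : E₀, j x₀ = p.1 ∧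
      ∃ e : E, ∀ z : E₀, (⟪e, j z⟫ : ℂ) = ⟪K x₀, K z⟫ - ⟪Gap D₀ p.2, L z⟫}

/-- Monotonicity of a relation on `BD(G)` with respect to the graph inner product. -/
def IsMonotoneBDG (D₀ : H →ₗ.[ℂ] E) (h : Set (E × E)) : Prop :=
  ∀ p ∈ h, ∀ q ∈ h, 0 ≤ (innG D₀ (p.1 - q.1) (p.2 - q.2)).re

/-- Maximal monotonicity of a relation on the Hilbert space `BD(G)` (with the graph inner
product): `h` is monotone and has no proper monotone extension within `BD(G) ⊕ BD(G)`. -/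
def IsMaximalMonotoneBDG (G₀ : E →ₗ.[ℂ] H) (D₀ : H →ₗ.[ℂ] E) (h : Set (E × E)) : Prop :=
  h ⊆ (BDG G₀ D₀) ×ˢ (BDG G₀ D₀) ∧ IsMonotoneBDG D₀ h ∧
    ∀ b : Set (E × E), b ⊆ (BDG G₀ D₀) ×ˢ (BDG G₀ D₀) → IsMonotoneBDG D₀ b → h ⊆ b → b = h

/-!
Testing the condition defining `h` against `D(G₀)`, where `K` vanishes, forces
`K^⋄Kx − L^⋄Ġy = y`. Hence `(x, y) ∈ h` means that the graph inner product `⟪y, z⟫_{D_G}` equals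
`⟪Kx, Kz⟫_U` for all `z ∈ E₀`, and `Re ⟪x, y⟫_{D_G} = ‖Kx‖² ≥ 0` gives monotonicity.

For maximality, let `f ∈ BD(G)`. As `(L, K)` is closed, its graph `{(x, Lx, Kx)}` has a point
nearest to `(f, Gf, 0)`, which gives `x ∈ E₀` with
`⟪x, z⟫_{D_G} + ⟪Kx, Kz⟫_U = ⟪f, z⟫_{D_G}` for all `z ∈ E₀`, so that `(x, f - x) ∈ h`.
Thus `1 + h` is onto, and Minty's criterion applies.
-/

section GraphInnerProduct

omit [CompleteSpace E]
variable {D₀ : H →ₗ.[ℂ] E} {u v : E}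

theorem Gap_of_mem (hu : u ∈ (Gop D₀).domain) : Gap D₀ u = Gop D₀ ⟨u, hu⟩ :=
  dif_pos hu

theorem Gap_add (hu : u ∈ (Gop D₀).domain) (hv : v ∈ (Gop D₀).domain) :
    Gap D₀ (u + v) = Gap D₀ u + Gap D₀ v := by
  rw [Gap_of_mem hu, Gap_of_mem hv, Gap_of_mem (add_mem hu hv), ← LinearPMap.map_add]
  rfl

theorem Gap_smul (c : ℂ) (hu : u ∈ (Gop D₀).domain) : Gap D₀ (c • u) = c • Gap D₀ u := by
  rw [Gap_of_mem hu, Gap_of_mem (Submodule.smul_mem _ c hu), ← LinearPMap.map_smul]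
  rfl

variable (D₀) in
theorem Gap_zero : Gap D₀ 0 = 0 := by
  simpa only [zero_smul] using Gap_smul 0 (zero_mem (Gop D₀).domain)

theorem Gap_neg (hu : u ∈ (Gop D₀).domain) : Gap D₀ (-u) = -Gap D₀ u := by
  simpa only [neg_one_smul] using Gap_smul (-1) hu

theorem Gap_sub (hu : u ∈ (Gop D₀).domain) (hv : v ∈ (Gop D₀).domain) :
    Gap D₀ (u - v) = Gap D₀ u - Gap D₀ v := by
  rw [sub_eq_add_neg, Gap_add hu (neg_mem hv), Gap_neg hv, ← sub_eq_add_neg]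

variable (D₀) in
theorem innG_conj_symm (u v : E) : starRingEnd ℂ (innG D₀ v u) = innG D₀ u v := by
  simp only [innG, map_add, inner_conj_symm]

theorem re_innG_neg_right (hu : u ∈ (Gop D₀).domain) :
    (innG D₀ u (-u)).re = -(‖u‖ ^ 2 + ‖Gap D₀ u‖ ^ 2) := by
  have hE : (⟪u, u⟫ : ℂ).re = ‖u‖ ^ 2 := inner_self_eq_norm_sq (𝕜 := ℂ) u
  have hH : (⟪Gap D₀ u, Gap D₀ u⟫ : ℂ).re = ‖Gap D₀ u‖ ^ 2 :=
    inner_self_eq_norm_sq (𝕜 := ℂ) (Gap D₀ u)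
  simp only [innG, Gap_neg hu, inner_neg_right, Complex.add_re, Complex.neg_re, hE, hH, neg_add]

end GraphInnerProduct

/-- The boundary data space `BD(G)` as a linear subspace of `E`, with carrier `BDG G₀ D₀`. -/
def BDGSubmodule (G₀ : E →ₗ.[ℂ] H) (D₀ : H →ₗ.[ℂ] E) : Submodule ℂ E where
  carrier := BDG G₀ D₀
  zero_mem' := ⟨zero_mem _, fun v _ => by simp only [innG, Gap_zero, inner_zero_left, add_zero]⟩
  add_mem' := fun {a b} ha hb => ⟨add_mem ha.1 hb.1, fun v hv => by
    have hav := ha.2 v hv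
    have hbv := hb.2 v hv
    simp only [innG, Gap_add ha.1 hb.1, inner_add_left] at hav hbv ⊢
    linear_combination hav + hbv⟩
  smul_mem' := fun c a ha => ⟨Submodule.smul_mem _ c ha.1, fun v hv => by
    have hav := ha.2 v hv
    simp only [innG, Gap_smul c ha.1, inner_smul_left] at hav ⊢
    linear_combination starRingEnd ℂ c * hav⟩

/-- The boundary relation `h` as a linear subspace of `E × E`, with carrier `hRel G₀ D₀ j L K`. -/
def hRelSubmodule (G₀ : E →ₗ.[ℂ] H) (D₀ : H →ₗ.[ℂ] E) (j : E₀ →L[ℂ] E) (L : E₀ →L[ℂ] H)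
    (K : E₀ →L[ℂ] U) : Submodule ℂ (E × E) where
  carrier := hRel G₀ D₀ j L K
  zero_mem' := ⟨zero_mem (BDGSubmodule G₀ D₀), zero_mem (BDGSubmodule G₀ D₀), 0, map_zero j, 0,
    fun z => by simp only [Prod.snd_zero, Gap_zero, map_zero, inner_zero_left, sub_zero]⟩
  add_mem' := by
    rintro p q ⟨hp₁, hp₂, x, hx, e, he⟩ ⟨hq₁, hq₂, y, hy, e', he'⟩
    refine ⟨(BDGSubmodule G₀ D₀).add_mem hp₁ hq₁, (BDGSubmodule G₀ D₀).add_mem hp₂ hq₂,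
      x + y, by rw [map_add, hx, hy, Prod.fst_add], e + e', fun z => ?_⟩
    simp only [Prod.snd_add, Gap_add hp₂.1 hq₂.1, map_add, inner_add_left, he, he']
    ring
  smul_mem' := by
    rintro c p ⟨hp₁, hp₂, x, hx, e, he⟩
    refine ⟨(BDGSubmodule G₀ D₀).smul_mem c hp₁, (BDGSubmodule G₀ D₀).smul_mem c hp₂,
      c • x, by rw [map_smul, hx, Prod.smul_fst], c • e, fun z => ?_⟩
    simp only [Prod.smul_snd, Gap_smul c hp₂.1, map_smul, inner_smul_left, he]
    ring

section Minty

omit [CompleteSpace E]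
variable {G₀ : E →ₗ.[ℂ] H} {D₀ : H →ₗ.[ℂ] E}

theorem eq_of_re_innG_nonneg {u w x y : E} (hu : u ∈ (Gop D₀).domain) (hx : x ∈ (Gop D₀).domain)
    (hsum : u + w = x + y) (hmono : 0 ≤ (innG D₀ (u - x) (w - y)).re) : u = x ∧ w = y := by
  have hwy : w - y = -(u - x) := by rw [eq_sub_of_add_eq' hsum]; abel
  rw [hwy, re_innG_neg_right (sub_mem hu hx)] at hmono
  have hux : ‖u - x‖ = 0 := by
    nlinarith [norm_nonneg (u - x), sq_nonneg ‖Gap D₀ (u - x)‖]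
  obtain rfl : u = x := sub_eq_zero.1 (norm_eq_zero.1 hux)
  exact ⟨rfl, add_left_cancel hsum⟩

theorem IsMonotoneBDG.isMaximalMonotoneBDG_of_surjective {h : Set (E × E)}
    (hmono : IsMonotoneBDG D₀ h) (hBDG : h ⊆ BDG G₀ D₀ ×ˢ BDG G₀ D₀)
    (hsurj : ∀ f ∈ BDG G₀ D₀, ∃ p ∈ h, p.1 + p.2 = f) : IsMaximalMonotoneBDG G₀ D₀ h := by
  refine ⟨hBDG, hmono, fun b hb hbmono hhb => (Set.Subset.antisymm hhb ?_).symm⟩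
  rintro ⟨u, w⟩ huw
  obtain ⟨hu, hw⟩ := hb huw
  obtain ⟨⟨x, y⟩, hxy, hsum⟩ := hsurj (u + w) ((BDGSubmodule G₀ D₀).add_mem hu hw)
  obtain ⟨rfl, rfl⟩ :=
    eq_of_re_innG_nonneg hu.1 (hBDG hxy).1.1 hsum.symm (hbmono _ huw _ (hhb hxy))
  exact hxy

end Minty

section ClosedRange

omit [CompleteSpace E₀]
variable {j : E₀ →L[ℂ] E} {L : E₀ →L[ℂ] H} {K : E₀ →L[ℂ] U}

/-- The map `x ↦ (j x, L x, K x)` into the Hilbert space direct sum `E ⊕ H ⊕ U`, whose range is the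
graph of `(L, K)`. -/
def graphMap (j : E₀ →L[ℂ] E) (L : E₀ →L[ℂ] H) (K : E₀ →L[ℂ] U) :
    E₀ →L[ℂ] WithLp 2 (E × WithLp 2 (H × U)) :=
  (WithLp.prodContinuousLinearEquiv 2 ℂ E (WithLp 2 (H × U))).symm.toContinuousLinearMap ∘L
    j.prod ((WithLp.prodContinuousLinearEquiv 2 ℂ H U).symm.toContinuousLinearMap ∘L L.prod K)

omit [CompleteSpace E] [CompleteSpace H] [CompleteSpace U] in
theorem graphMap_apply (x : E₀) :
    graphMap j L K x = WithLp.toLp 2 (j x, WithLp.toLp 2 (L x, K x)) := rfl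

omit [CompleteSpace E] [CompleteSpace H] [CompleteSpace U] in
theorem ClosedLK.isClosed_range_graphMap (hclosed : ClosedLK j L K) :
    IsClosed ((graphMap j L K).range : Set (WithLp 2 (E × WithLp 2 (H × U)))) := by
  refine IsSeqClosed.isClosed fun s p hs hp => ?_
  choose f hf using hs
  obtain rfl : (fun n => graphMap j L K (f n)) = s := funext hf
  have hsnd := ((WithLp.continuous_snd 2 E (WithLp 2 (H × U))).tendsto p).comp hp
  obtain ⟨w, hj, hL, hK⟩ := hclosed f p.fst p.snd.fst p.snd.snd
    (((WithLp.continuous_fst 2 _ _).tendsto p).comp hp)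
    (((WithLp.continuous_fst 2 _ _).tendsto p.snd).comp hsnd)
    (((WithLp.continuous_snd 2 _ _).tendsto p.snd).comp hsnd)
  exact ⟨w, by rw [ContinuousLinearMap.coe_coe, graphMap_apply, hj, hL, hK]; rfl⟩

theorem ClosedLK.exists_inner_add_inner_add_inner_eq (hclosed : ClosedLK j L K) (f : E) (g : H) :
    ∃ x₀ : E₀, ∀ z : E₀,
      (⟪j x₀, j z⟫ + ⟪L x₀, L z⟫ + ⟪K x₀, K z⟫ : ℂ) = ⟪f, j z⟫ + ⟪g, L z⟫ := by
  have := hclosed.isClosed_range_graphMap.completeSpace_coe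
  obtain ⟨_, ⟨x₀, rfl⟩, horth⟩ :=
    Submodule.HasOrthogonalProjection.exists_orthogonal (K := (graphMap j L K).range)
      (WithLp.toLp 2 (f, WithLp.toLp 2 (g, 0)))
  refine ⟨x₀, fun z => ?_⟩
  have hz : (⟪f - j x₀, j z⟫ + (⟪g - L x₀, L z⟫ + ⟪0 - K x₀, K z⟫) : ℂ) = 0 :=
    (Submodule.mem_orthogonal' _ _).1 horth _ ⟨z, rfl⟩
  simp only [inner_sub_left, inner_zero_left] at hz
  linear_combination -hz

end ClosedRange

section BoundaryRelation

omit [CompleteSpace E₀]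
variable {G₀ : E →ₗ.[ℂ] H} {D₀ : H →ₗ.[ℂ] E}
  {j : E₀ →L[ℂ] E} {L : E₀ →L[ℂ] H} {K : E₀ →L[ℂ] U}

omit [CompleteSpace E] [CompleteSpace U] in
theorem exists_forall_innG_eq_of_mem_hRel (hG₀dense : Dense (G₀.domain : Set E))
    (hL : ∀ x, L x = Gap D₀ (j x)) (hG₀ : ∀ u ∈ G₀.domain, ∃ x, j x = u)
    (hK0 : ∀ x, j x ∈ G₀.domain → K x = 0) {p : E × E} (hp : p ∈ hRel G₀ D₀ j L K) :
    ∃ x₀, j x₀ = p.1 ∧ ∀ z, innG D₀ p.2 (j z) = ⟪K x₀, K z⟫ := by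
  obtain ⟨-, hp₂, x₀, hx₀, e, he⟩ := hp
  have e_eq : e = p.2 := by
    refine hG₀dense.eq_of_inner_left ℂ fun v hv => ?_
    obtain ⟨z, rfl⟩ := hG₀ v hv
    have horth := hp₂.2 _ hv
    rw [innG] at horth
    rw [he z, hK0 z hv, inner_zero_right, hL]
    linear_combination -horth
  refine ⟨x₀, hx₀, fun z => ?_⟩
  rw [innG, ← hL, ← e_eq, he z, e_eq]
  ring

omit [CompleteSpace E] [CompleteSpace U] in
theorem isMonotoneBDG_hRel (hG₀dense : Dense (G₀.domain : Set E))
    (hL : ∀ x, L x = Gap D₀ (j x)) (hG₀ : ∀ u ∈ G₀.domain, ∃ x, j x = u)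
    (hK0 : ∀ x, j x ∈ G₀.domain → K x = 0) : IsMonotoneBDG D₀ (hRel G₀ D₀ j L K) := by
  intro p hp q hq
  obtain ⟨x, hx, hweak⟩ := exists_forall_innG_eq_of_mem_hRel hG₀dense hL hG₀ hK0
    ((hRelSubmodule G₀ D₀ j L K).sub_mem hp hq)
  change 0 ≤ (innG D₀ (p - q).1 (p - q).2).re
  rw [← innG_conj_symm, Complex.conj_re, ← hx, hweak]
  exact inner_self_nonneg (𝕜 := ℂ)

theorem ClosedLK.exists_forall_innG_sub_eq (hclosed : ClosedLK j L K)
    (hdom : ∀ x, j x ∈ (Gop D₀).domain) (hL : ∀ x, L x = Gap D₀ (j x))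
    {f : E} (hf : f ∈ (Gop D₀).domain) :
    ∃ x₀, ∀ z, innG D₀ (f - j x₀) (j z) = ⟪K x₀, K z⟫ := by
  obtain ⟨x₀, hx₀⟩ := hclosed.exists_inner_add_inner_add_inner_eq f (Gap D₀ f)
  refine ⟨x₀, fun z => ?_⟩
  rw [innG, Gap_sub hf (hdom x₀), ← hL, ← hL, inner_sub_left, inner_sub_left]
  linear_combination -hx₀ z

theorem ClosedLK.exists_mem_hRel_add_eq (hclosed : ClosedLK j L K)
    (hdom : ∀ x, j x ∈ (Gop D₀).domain) (hL : ∀ x, L x = Gap D₀ (j x))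
    (hG₀ : ∀ u ∈ G₀.domain, ∃ x, j x = u) (hK0 : ∀ x, j x ∈ G₀.domain → K x = 0)
    {f : E} (hf : f ∈ BDG G₀ D₀) : ∃ p ∈ hRel G₀ D₀ j L K, p.1 + p.2 = f := by
  obtain ⟨x₀, hx₀⟩ := hclosed.exists_forall_innG_sub_eq hdom hL hf.1
  have hy : f - j x₀ ∈ BDGSubmodule G₀ D₀ := by
    refine ⟨sub_mem hf.1 (hdom x₀), fun v hv => ?_⟩
    obtain ⟨z, rfl⟩ := hG₀ v hv
    rw [hx₀ z, hK0 z hv, inner_zero_right]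
  have hx : j x₀ ∈ BDGSubmodule G₀ D₀ := by simpa only [sub_sub_cancel] using sub_mem hf hy
  refine ⟨(j x₀, f - j x₀), ⟨hx, hy, x₀, rfl, f - j x₀, fun z => ?_⟩, add_sub_cancel _ _⟩
  rw [← hx₀ z, innG, hL]
  ring

end BoundaryRelation

omit [CompleteSpace E₀] in
theorem hRel_linear_maximal_monotone_general (G₀ : E →ₗ.[ℂ] H) (D₀ : H →ₗ.[ℂ] E)
    (hG₀dense : Dense (G₀.domain : Set E)) (hD₀dense : Dense (D₀.domain : Set H))
    (hsub : G₀ ≤ Gop D₀)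
    (j : E₀ →L[ℂ] E) (L : E₀ →L[ℂ] H) (K : E₀ →L[ℂ] U)
    (hclosed : ClosedLK j L K)
    (hLsubG : ∀ x : E₀, j x ∈ (Gop D₀).domain ∧ L x = Gap D₀ (j x))
    (hG₀subL : ∀ u ∈ G₀.domain, ∃ x : E₀, j x = u)
    (hK0 : ∀ x : E₀, j x ∈ G₀.domain → K x = 0) :
    (0 : E × E) ∈ hRel G₀ D₀ j L K ∧
    (∀ p ∈ hRel G₀ D₀ j L K, ∀ q ∈ hRel G₀ D₀ j L K, p + q ∈ hRel G₀ D₀ j L K) ∧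
    (∀ c : ℂ, ∀ p ∈ hRel G₀ D₀ j L K, c • p ∈ hRel G₀ D₀ j L K) ∧
    IsMaximalMonotoneBDG G₀ D₀ (hRel G₀ D₀ j L K) := by
  obtain ⟨hdom, hL⟩ := forall_and.1 hLsubG
  let h := hRelSubmodule G₀ D₀ j L K
  have hmono := isMonotoneBDG_hRel hG₀dense hL hG₀subL hK0
  have hsurj : ∀ f ∈ BDG G₀ D₀, ∃ p ∈ hRel G₀ D₀ j L K, p.1 + p.2 = f := fun _ =>
    hclosed.exists_mem_hRel_add_eq hdom hL hG₀subL hK0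
  exact ⟨h.zero_mem, fun _ hp _ hq => h.add_mem hp hq, fun c _ hp => h.smul_mem c hp,
    hmono.isMaximalMonotoneBDG_of_surjective (fun _ hp => ⟨hp.1, hp.2.1⟩) hsurj⟩

/-- [Trostorff 2015, Proposition 3.4]: the boundary relation `h` is linear and maximal
monotone. -/
theorem hRel_linear_maximal_monotone (G₀ : E →ₗ.[ℂ] H) (D₀ : H →ₗ.[ℂ] E)
    (hG₀dense : Dense (G₀.domain : Set E)) (hD₀dense : Dense (D₀.domain : Set H))
    (hG₀closed : G₀.IsClosed) (hD₀closed : D₀.IsClosed)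
    (hsub : G₀ ≤ Gop D₀)
    (j : E₀ →L[ℂ] E) (L : E₀ →L[ℂ] H) (K : E₀ →L[ℂ] U)
    (hj_inj : Function.Injective j) (hj_dense : DenseRange j)
    (hclosed : ClosedLK j L K)
    (hLsubG : ∀ x : E₀, j x ∈ (Gop D₀).domain ∧ L x = Gap D₀ (j x))
    (hG₀subL : ∀ u ∈ G₀.domain, ∃ x : E₀, j x = u)
    (hK0 : ∀ x : E₀, j x ∈ G₀.domain → K x = 0) :
    -- `h` is a linear subspace of `BD(G) ⊕ BD(G)`
    (0 : E × E) ∈ hRel G₀ D₀ j L K ∧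
    (∀ p ∈ hRel G₀ D₀ j L K, ∀ q ∈ hRel G₀ D₀ j L K, p + q ∈ hRel G₀ D₀ j L K) ∧
    (∀ c : ℂ, ∀ p ∈ hRel G₀ D₀ j L K, c • p ∈ hRel G₀ D₀ j L K) ∧
    -- and `h` is maximal monotone
    IsMaximalMonotoneBDG G₀ D₀ (hRel G₀ D₀ j L K) := by
  exact hRel_linear_maximal_monotone_general G₀ D₀ hG₀dense hD₀dense hsub j L K hclosed hLsubG
    hG₀subL hK0
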